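/- For j ∈ {0,1} and every τ in the complex upper half plane, f_{4,j}(τ)⁴ = E'_{4,2}(τ) − (−1)ʲ·8i·(η(τ)η(4τ)/η(2τ))⁴ (note that 8i is a square root of −64); moreover f_{4,0}(τ)·f_{4,1}(τ) = θ(τ)². -/

import Mathlib

open Complex

/-- `q = exp(2πiτ)`. -/
noncomputable def qq (τ : ℂ) : ℂ := Complex.exp (2 * Real.pi * Complex.I * τ)

/-- `σ_k(n) = Σ_{d ∣ n} d^k`, as a complex number. -/
noncomputable def sigmaC (k n : ℕ) : ℂ := ∑ d ∈ n.divisors, (d : ℂ) ^ k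

/-- Eisenstein series `E₂(τ) = 1 - 24 Σ_{n≥1} σ₁(n) qⁿ`. -/
noncomputable def E₂ (τ : ℂ) : ℂ := 1 - 24 * ∑' n : ℕ, sigmaC 1 (n + 1) * qq τ ^ (n + 1)

/-- Eisenstein series `E₄(τ) = 1 + 240 Σ_{n≥1} σ₃(n) qⁿ`. -/
noncomputable def E₄ (τ : ℂ) : ℂ := 1 + 240 * ∑' n : ℕ, sigmaC 3 (n + 1) * qq τ ^ (n + 1)

/-- Eisenstein series `E₆(τ) = 1 - 504 Σ_{n≥1} σ₅(n) qⁿ`. -/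
noncomputable def E₆ (τ : ℂ) : ℂ := 1 - 504 * ∑' n : ℕ, sigmaC 5 (n + 1) * qq τ ^ (n + 1)

/-- Dedekind eta function `η(τ) = exp(πiτ/12) ∏_{n≥1} (1 - qⁿ)`. -/
noncomputable def η (τ : ℂ) : ℂ :=
  Complex.exp (Real.pi * Complex.I * τ / 12) * ∏' n : ℕ, (1 - qq τ ^ (n + 1))

/-- Theta function `θ(τ) = Σ_{n ∈ ℤ} q^{n²}`. -/
noncomputable def θ (τ : ℂ) : ℂ := ∑' n : ℤ, qq τ ^ (n ^ 2)

/-- The character `χ₋₄`: `χ₋₄(d) = 1, -1, 0` according as `d ≡ 1, 3, 0/2 (mod 4)`. -/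
noncomputable def χ₄ (d : ℕ) : ℂ := if d % 4 = 1 then 1 else if d % 4 = 3 then -1 else 0

/-- The character `χ₋₃`: `χ₋₃(d) = 1, -1, 0` according as `d ≡ 1, 2, 0 (mod 3)`. -/
noncomputable def χ₃ (d : ℕ) : ℂ := if d % 3 = 1 then 1 else if d % 3 = 2 then -1 else 0

/-- `E_{1,-4}(τ) = 1/4 + Σ_{n≥1} (Σ_{d∣n} χ₋₄(d)) qⁿ`. -/
noncomputable def E₁₄ (τ : ℂ) : ℂ :=
  1 / 4 + ∑' n : ℕ, (∑ d ∈ (n + 1).divisors, χ₄ d) * qq τ ^ (n + 1)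

/-- `E_{1,-3}(τ) = 1/6 + Σ_{n≥1} (Σ_{d∣n} χ₋₃(d)) qⁿ`. -/
noncomputable def E₁₃ (τ : ℂ) : ℂ :=
  1 / 6 + ∑' n : ℕ, (∑ d ∈ (n + 1).divisors, χ₃ d) * qq τ ^ (n + 1)

/-- `E_{2,2}(τ) = 2E₂(2τ) - E₂(τ)`. -/
noncomputable def E₂₂ (τ : ℂ) : ℂ := 2 * E₂ (2 * τ) - E₂ τ

/-- `E_{2,4}(τ) = (4E₄(2τ) - E₄(τ))/3`. -/
noncomputable def E₂₄ (τ : ℂ) : ℂ := (4 * E₄ (2 * τ) - E₄ τ) / 3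

/-- `E_{3,2}(τ) = (3E₂(3τ) - E₂(τ))/2`. -/
noncomputable def E₃₂ (τ : ℂ) : ℂ := (3 * E₂ (3 * τ) - E₂ τ) / 2

/-- `E_{3,4}(τ) = (9E₄(3τ) - E₄(τ))/8`. -/
noncomputable def E₃₄ (τ : ℂ) : ℂ := (9 * E₄ (3 * τ) - E₄ τ) / 8

/-- `E_{4,2}(τ) = (4E₂(4τ) - E₂(τ))/3`. -/
noncomputable def E₄₂ (τ : ℂ) : ℂ := (4 * E₂ (4 * τ) - E₂ τ) / 3

/-- `E'_{4,2}(τ) = 4E₂(4τ) - 4E₂(2τ) + E₂(τ)`. -/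
noncomputable def E₄₂' (τ : ℂ) : ℂ := 4 * E₂ (4 * τ) - 4 * E₂ (2 * τ) + E₂ τ

/-- `f_{1,j}(τ) = 2E₂(τ) - ((3+(-1)ʲi√3)/6)E₂(τ/2) - ((3-(-1)ʲi√3)/6)E₂((τ+1)/2)`. -/
noncomputable def f₁ (j : ℕ) (τ : ℂ) : ℂ :=
  2 * E₂ τ - ((3 + (-1 : ℂ) ^ j * Complex.I * Real.sqrt 3) / 6) * E₂ (τ / 2)
    - ((3 - (-1 : ℂ) ^ j * Complex.I * Real.sqrt 3) / 6) * E₂ ((τ + 1) / 2)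

/-- `g_{1,j}(τ) = (3/2)E₂(τ) - (1/4) Σ_{0≤m≤2, m≢j (mod 3)} E₂((τ+m)/3)`. -/
noncomputable def g₁ (j : ℕ) (τ : ℂ) : ℂ :=
  (3 / 2) * E₂ τ -
    (1 / 4) * ∑ m ∈ (Finset.range 3).filter (fun m => ¬ m % 3 = j % 3), E₂ ((τ + m) / 3)

/-- `f_{2,j}(τ) = 4E_{1,-4}(τ) + (-1)ʲ·2i·(E_{1,-4}(τ/2) - E_{1,-4}((τ+1)/2))`. -/
noncomputable def f₂ (j : ℕ) (τ : ℂ) : ℂ :=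
  4 * E₁₄ τ + (-1 : ℂ) ^ j * 2 * Complex.I * (E₁₄ (τ / 2) - E₁₄ ((τ + 1) / 2))

/-- `f_{3,j}(τ) = 6E_{1,-3}(2τ) + (-1)ʲ·i√3·(E_{1,-3}(τ/2) - E_{1,-3}((τ+1)/2))`. -/
noncomputable def f₃ (j : ℕ) (τ : ℂ) : ℂ :=
  6 * E₁₃ (2 * τ) +
    (-1 : ℂ) ^ j * Complex.I * Real.sqrt 3 * (E₁₃ (τ / 2) - E₁₃ ((τ + 1) / 2))

/-- `f_{4,j}(τ) = θ(τ/2 - (-1)ʲ/4)`. -/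
noncomputable def f₄ (j : ℕ) (τ : ℂ) : ℂ := θ (τ / 2 - (-1 : ℂ) ^ j / 4)

/-- `g_{4,j}(τ) = 2θ(2τ)² - θ((τ+j)/2)²`. -/
noncomputable def g₄ (j : ℕ) (τ : ℂ) : ℂ := 2 * θ (2 * τ) ^ 2 - θ ((τ + j) / 2) ^ 2

/-- `E_{3,-3,1}(τ) = -1/9 + Σ_{n≥1} (Σ_{d∣n} d²χ₋₃(d)) qⁿ`. -/
noncomputable def E₃₃₁ (τ : ℂ) : ℂ :=
  -(1 / 9) + ∑' n : ℕ, (∑ d ∈ (n + 1).divisors, (d : ℂ) ^ 2 * χ₃ d) * qq τ ^ (n + 1)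

/-- `E_{3,1,-3}(τ) = Σ_{n≥1} (Σ_{d∣n} d²χ₋₃(n/d)) qⁿ`. -/
noncomputable def E₃₁₃ (τ : ℂ) : ℂ :=
  ∑' n : ℕ, (∑ d ∈ (n + 1).divisors, (d : ℂ) ^ 2 * χ₃ ((n + 1) / d)) * qq τ ^ (n + 1)

/-!
Put `A = θ(2τ)` and `B = θ₂(2τ)`, where `θ₂(τ) = Σ_{n ∈ ℤ} q^{(n+1/2)²}`. Separating even and odd
`n` in `θ(τ/2 ∓ 1/4)` gives `f_{4,j}(τ) = A - (-1)ʲ i B`, and the substitution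
`(m, n) ↦ (m + n, m - n)` gives `θ(τ)² = A² + B²`, which is the second identity. For the first one,
expand `(A ∓ iB)⁴ = (A⁴ - 6A²B² + B⁴) ∓ 4i AB(A² - B²)`.

Jacobi's triple product, obtained from its finite form by induction, turns `A`, `B` and `A² ± B²`
into eta quotients; in particular `AB(A² - B²) = 2(η(τ)η(4τ)/η(2τ))⁴`. On the other hand
`πi E'_{4,2}` is the logarithmic derivative of `2(η(τ)η(4τ)/η(2τ)²)¹² = AB(A² - B²)/(A² + B²)²`. The
right-hand side is homogeneous of degree zero in `A` and `B`, so its logarithmic derivative is a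
rational function of them times the Wronskian of `θ` and `θ₂`, which is `πi η⁶` by Jacobi's series
for `η³`. This yields `E'_{4,2} = A⁴ - 6A²B² + B⁴`.
-/

section Dissection

theorem hasSum_add_of_bijective_sumElim {ι κ E : Type*} [AddCommGroup E] [UniformSpace E]
    [IsUniformAddGroup E] [CompleteSpace E] [T2Space E] {f : ι → E} {s : E} {e₁ e₂ : κ → ι}
    (he : Function.Bijective (Sum.elim e₁ e₂)) (hf : HasSum f s) :
    HasSum (fun k => f (e₁ k) + f (e₂ k)) s := by
  have h₁ : Summable (f ∘ e₁) :=
    hf.summable.comp_injective (he.injective.comp Sum.inl_injective)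
  have h₂ : Summable (f ∘ e₂) :=
    hf.summable.comp_injective (he.injective.comp Sum.inr_injective)
  have hsum : HasSum (f ∘ Sum.elim e₁ e₂) s := (Equiv.ofBijective _ he).hasSum_iff.2 hf
  exact (h₁.hasSum.sum h₂.hasSum).unique hsum ▸ h₁.hasSum.add h₂.hasSum

theorem bijective_neg_two_mul_sumElim :
    Function.Bijective (Sum.elim (fun n : ℤ => -(2 * n)) fun n : ℤ => 2 * n + 1) := by
  refine ⟨?_, fun n => ?_⟩
  · rintro (m | m) (n | n) h <;> simp only [Sum.elim_inl, Sum.elim_inr] at h <;> grind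
  · rcases Int.even_or_odd' n with ⟨k, rfl | rfl⟩
    · exact ⟨.inl (-k), by simp⟩
    · exact ⟨.inr k, rfl⟩

theorem bijective_add_sub_sumElim :
    Function.Bijective (Sum.elim (fun n : ℤ × ℤ => (n.1 + n.2, n.1 - n.2))
      fun n : ℤ × ℤ => (n.1 + n.2 + 1, n.1 - n.2)) := by
  refine ⟨?_, fun ⟨m, n⟩ => ?_⟩
  · rintro (m | m) (n | n) h <;>
      simp only [Sum.elim_inl, Sum.elim_inr, Sum.inl.injEq, Sum.inr.injEq, reduceCtorEq,
        Prod.ext_iff] at h ⊢ <;> lia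
  · rcases Int.even_or_odd' (m + n) with ⟨k, hk | hk⟩
    · exact ⟨.inl (k, k - n), Prod.ext (by simp only [Sum.elim_inl]; lia) (by simp)⟩
    · exact ⟨.inr (k, k - n), Prod.ext (by simp only [Sum.elim_inr]; lia) (by simp)⟩

theorem hasSum_mul_prod {ι κ R : Type*} [NormedRing R] [NormedAlgebra ℝ R]
    [FiniteDimensional ℝ R] {f : ι → R} {g : κ → R} {s t : R}
    (hf : HasSum f s) (hg : HasSum g t) : HasSum (fun i : ι × κ => f i.1 * g i.2) (s * t) :=
  have := FiniteDimensional.complete ℝ R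
  hf.mul hg (summable_mul_of_summable_norm hf.summable.norm hg.summable.norm)

end Dissection

/-- The infinite `q`-Pochhammer symbol `(a; q)_∞ = ∏_{k ≥ 0} (1 - a qᵏ)`, the building block of
theta and eta products. -/
noncomputable def qPochhammer (a q : ℂ) : ℂ := ∏' k : ℕ, (1 - a * q ^ k)

section qPochhammer

open Filter Topology

variable {a q : ℂ}

theorem norm_sq_lt_one (hq : ‖q‖ < 1) : ‖q ^ 2‖ < 1 := by
  simpa using pow_lt_one₀ (norm_nonneg q) hq two_ne_zero

theorem multipliable_one_sub_mul_pow (a : ℂ) (hq : ‖q‖ < 1) :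
    Multipliable fun k : ℕ => 1 - a * q ^ k := by
  have h : Summable fun k : ℕ => ‖-(a * q ^ k)‖ := by
    simpa [norm_mul, norm_pow] using
      (summable_geometric_of_lt_one (norm_nonneg q) hq).mul_left ‖a‖
  simpa only [sub_eq_add_neg] using multipliable_one_add_of_summable h

@[simp]
theorem qPochhammer_zero_left (q : ℂ) : qPochhammer 0 q = 1 := by simp [qPochhammer]

theorem qPochhammer_eq_zero {k : ℕ} (h : a * q ^ k = 1) : qPochhammer a q = 0 :=
  tprod_of_exists_eq_zero ⟨k, by rw [h, sub_self]⟩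

theorem qPochhammer_eq_mul (a : ℂ) (hq : ‖q‖ < 1) :
    qPochhammer a q = (1 - a) * qPochhammer (a * q) q := by
  have hshift (k : ℕ) : 1 - a * q ^ (k + 1) = 1 - a * q * q ^ k := by ring
  have h : Multipliable fun k : ℕ => 1 - a * q ^ (k + 1) := by
    simpa only [hshift] using multipliable_one_sub_mul_pow (a * q) hq
  rw [qPochhammer, tprod_eq_zero_mul' (f := fun k : ℕ => 1 - a * q ^ k) h, pow_zero, mul_one,
    tprod_congr hshift, qPochhammer]

theorem qPochhammer_eq_even_mul_odd (a : ℂ) (hq : ‖q‖ < 1) :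
    qPochhammer a q = qPochhammer a (q ^ 2) * qPochhammer (a * q) (q ^ 2) := by
  have hq2 := norm_sq_lt_one hq
  have heven (k : ℕ) : 1 - a * q ^ (2 * k) = 1 - a * (q ^ 2) ^ k := by ring
  have hodd (k : ℕ) : 1 - a * q ^ (2 * k + 1) = 1 - a * q * (q ^ 2) ^ k := by ring
  have hmul_even : Multipliable fun k : ℕ => 1 - a * q ^ (2 * k) := by
    simpa only [heven] using multipliable_one_sub_mul_pow a hq2
  have hmul_odd : Multipliable fun k : ℕ => 1 - a * q ^ (2 * k + 1) := by
    simpa only [hodd] using multipliable_one_sub_mul_pow (a * q) hq2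
  rw [qPochhammer, ← tprod_even_mul_odd (f := fun k : ℕ => 1 - a * q ^ k) hmul_even hmul_odd,
    tprod_congr heven, tprod_congr hodd, qPochhammer, qPochhammer]

theorem qPochhammer_mul_neg (a : ℂ) (hq : ‖q‖ < 1) :
    qPochhammer a q * qPochhammer (-a) q = qPochhammer (a ^ 2) (q ^ 2) := by
  rw [qPochhammer, qPochhammer, ← (multipliable_one_sub_mul_pow a hq).tprod_mul
    (multipliable_one_sub_mul_pow (-a) hq), qPochhammer]
  exact tprod_congr fun k => by ring

theorem differentiable_qPochhammer (hq : ‖q‖ < 1) : Differentiable ℂ (qPochhammer · q) := by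
  intro a
  have hprod : HasProdLocallyUniformlyOn (fun (k : ℕ) (b : ℂ) => 1 + -(b * q ^ k))
      (fun b => ∏' k : ℕ, (1 + -(b * q ^ k))) (Metric.ball 0 (‖a‖ + 1)) := by
    refine Summable.hasProdLocallyUniformlyOn_nat_one_add (u := fun k => (‖a‖ + 1) * ‖q‖ ^ k)
      Metric.isOpen_ball ((summable_geometric_of_lt_one (norm_nonneg q) hq).mul_left _)
      (.of_forall fun k b hb => ?_) fun k => by fun_prop
    rw [norm_neg, norm_mul, norm_pow]
    gcongr
    simpa using (Metric.mem_ball.1 hb).le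
  have hdiff := hprod.differentiableOn
    (.of_forall fun _ => by simpa [Finset.prod_fn] using
      DifferentiableOn.finsetProd fun _ _ => by fun_prop) Metric.isOpen_ball
  simpa only [qPochhammer, sub_eq_add_neg] using
    hdiff.differentiableAt (Metric.isOpen_ball.mem_nhds (by simp))

theorem tendsto_qPochhammer_one {ι : Type*} {l : Filter ι} {u : ι → ℂ} (hq : ‖q‖ < 1)
    (hu : Tendsto u l (𝓝 0)) : Tendsto (fun i => qPochhammer (u i) q) l (𝓝 1) := by
  rw [← qPochhammer_zero_left q]
  exact (differentiable_qPochhammer hq).continuous.continuousAt.tendsto.comp hu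

theorem qPochhammer_zpow (hq0 : q ≠ 0) (hq : ‖q‖ < 1) (m : ℤ) :
    qPochhammer (q ^ m) q = (1 - q ^ m) * qPochhammer (q ^ (m + 1)) q := by
  rw [qPochhammer_eq_mul _ hq, zpow_add_one₀ hq0]

theorem qPochhammer_zpow_eq_zero {m : ℤ} (hq0 : q ≠ 0) (hm : m ≤ 0) :
    qPochhammer (q ^ m) q = 0 := by
  obtain ⟨k, rfl⟩ := Int.exists_eq_neg_ofNat hm
  exact qPochhammer_eq_zero (k := k) (by simp [hq0])

end qPochhammer

/-- The coefficient of `wⁿ` in the finite form of the triple product. It equals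
`(q;q)_∞² / ((q;q)_{N+n} (q;q)_{N-n})`, the Gaussian binomial `[2N, N+n]` up to a factor independent
of `n`; writing it without denominators makes it vanish by itself for `|n| > N`. -/
noncomputable def tripleProductCoeff (q : ℂ) (N : ℕ) (n : ℤ) : ℂ :=
  qPochhammer (q ^ (N + n + 1)) q * qPochhammer (q ^ (N - n + 1)) q

section TripleProductCoeff

open Filter Topology

variable {q : ℂ} {N : ℕ} {n : ℤ}

theorem tripleProductCoeff_neg (q : ℂ) (N : ℕ) (n : ℤ) :
    tripleProductCoeff q N (-n) = tripleProductCoeff q N n := by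
  rw [tripleProductCoeff, tripleProductCoeff, sub_neg_eq_add, ← sub_eq_add_neg, mul_comm]

theorem tripleProductCoeff_eq_zero (hq0 : q ≠ 0) (hn : N < |n|) : tripleProductCoeff q N n = 0 := by
  rcases lt_abs.1 hn with h | h
  · rw [tripleProductCoeff, qPochhammer_zpow_eq_zero (m := N - n + 1) hq0 (by lia), mul_zero]
  · rw [tripleProductCoeff, qPochhammer_zpow_eq_zero (m := N + n + 1) hq0 (by lia), zero_mul]

theorem tripleProductCoeff_eq_mul_succ (hq0 : q ≠ 0) (hq : ‖q‖ < 1) (N : ℕ) (n : ℤ) :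
    tripleProductCoeff q N n =
      (1 - q ^ (N + n + 1)) * (1 - q ^ (N - n + 1)) * tripleProductCoeff q (N + 1) n := by
  have hleft : (N + n + 1 + 1 : ℤ) = (N + 1 : ℕ) + n + 1 := by push_cast; ring
  have hright : (N - n + 1 + 1 : ℤ) = (N + 1 : ℕ) - n + 1 := by push_cast; ring
  rw [tripleProductCoeff, tripleProductCoeff, qPochhammer_zpow hq0 hq (N + n + 1),
    qPochhammer_zpow hq0 hq (N - n + 1), hleft, hright]
  ring

theorem tripleProductCoeff_sub_one (hq0 : q ≠ 0) (hq : ‖q‖ < 1) (N : ℕ) (n : ℤ) :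
    tripleProductCoeff q N (n - 1) =
      (1 - q ^ (N + n)) * (1 - q ^ (N + n + 1)) * tripleProductCoeff q (N + 1) n := by
  have hleft : (N + (n - 1) + 1 : ℤ) = N + n := by ring
  have hright : (N - (n - 1) + 1 : ℤ) = (N + 1 : ℕ) - n + 1 := by push_cast; ring
  have hsucc : (N + n + 1 + 1 : ℤ) = (N + 1 : ℕ) + n + 1 := by push_cast; ring
  rw [tripleProductCoeff, tripleProductCoeff, hleft, hright, qPochhammer_zpow hq0 hq (N + n),
    qPochhammer_zpow hq0 hq (N + n + 1), hsucc]
  ring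

theorem tripleProductCoeff_add_one (hq0 : q ≠ 0) (hq : ‖q‖ < 1) (N : ℕ) (n : ℤ) :
    tripleProductCoeff q N (n + 1) =
      (1 - q ^ (N - n)) * (1 - q ^ (N - n + 1)) * tripleProductCoeff q (N + 1) n := by
  rw [← tripleProductCoeff_neg, neg_add', tripleProductCoeff_sub_one hq0 hq,
    tripleProductCoeff_neg, ← sub_eq_add_neg]

theorem exists_norm_tripleProductCoeff_le (hq0 : q ≠ 0) (hq : ‖q‖ < 1) :
    ∃ C : ℝ, ∀ (N : ℕ) (n : ℤ), ‖tripleProductCoeff q N n‖ ≤ C := by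
  obtain ⟨C, hC⟩ := (isCompact_closedBall (0 : ℂ) 1).exists_bound_of_continuousOn
    (differentiable_qPochhammer hq).continuous.continuousOn
  have hC0 : 0 ≤ C := (norm_nonneg _).trans (hC 0 (by simp))
  have hbound {m : ℤ} (hm : 0 ≤ m) : ‖qPochhammer (q ^ m) q‖ ≤ C := by
    lift m to ℕ using hm
    exact hC _ (by simpa using pow_le_one₀ (norm_nonneg q) hq.le)
  refine ⟨C * C, fun N n => ?_⟩
  rcases lt_or_ge (N : ℤ) |n| with hn | hn
  · rw [tripleProductCoeff_eq_zero hq0 hn, norm_zero]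
    positivity
  · rw [tripleProductCoeff, norm_mul]
    have := abs_le.1 hn
    exact mul_le_mul (hbound (by lia)) (hbound (by lia)) (norm_nonneg _) hC0

theorem tendsto_tripleProductCoeff (hq0 : q ≠ 0) (hq : ‖q‖ < 1) (n : ℤ) :
    Tendsto (tripleProductCoeff q · n) atTop (𝓝 1) := by
  have hpow (m : ℤ) : Tendsto (fun N : ℕ => qPochhammer (q ^ (N + m)) q) atTop (𝓝 1) := by
    refine tendsto_qPochhammer_one hq ?_
    simpa [zpow_add₀ hq0] using
      (tendsto_pow_atTop_nhds_zero_of_norm_lt_one hq).mul_const (q ^ m)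
  simpa only [tripleProductCoeff, add_assoc, sub_eq_add_neg, mul_one] using
    (hpow (n + 1)).mul (hpow (-n + 1))

end TripleProductCoeff

section TripleProduct

variable {w p : ℂ}

theorem mul_zpow_sub_one_mul_zpow_sq (hw : w ≠ 0) (hp : p ≠ 0) (N : ℕ) (n : ℤ) :
    w * p ^ (2 * N + 1) * (w ^ (n - 1) * p ^ ((n - 1) ^ 2)) =
      w ^ n * p ^ (n ^ 2) * (p ^ 2) ^ (N - n + 1) := by
  have hexp : p ^ (2 * N + 1) * p ^ ((n - 1) ^ 2) = p ^ (n ^ 2) * (p ^ 2) ^ (N - n + 1) := by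
    rw [← zpow_natCast p 2, ← zpow_natCast p (2 * N + 1), ← zpow_mul, ← zpow_add₀ hp,
      ← zpow_add₀ hp]
    congr 1
    push_cast
    ring
  calc w * p ^ (2 * N + 1) * (w ^ (n - 1) * p ^ ((n - 1) ^ 2))
      = w * w ^ (n - 1) * (p ^ (2 * N + 1) * p ^ ((n - 1) ^ 2)) := by ring
    _ = w ^ n * p ^ (n ^ 2) * (p ^ 2) ^ (N - n + 1) := by
      rw [hexp, ← zpow_one_add₀ hw, add_sub_cancel, mul_assoc]

theorem tripleProductCoeff_recurrence (hw : w ≠ 0) (hp : p ≠ 0) (hp1 : ‖p‖ < 1) (N : ℕ) (n : ℤ) :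
    tripleProductCoeff (p ^ 2) N n * (w ^ n * p ^ (n ^ 2)) * (1 + p ^ (4 * N + 2)) +
        tripleProductCoeff (p ^ 2) N (n - 1) * (w ^ (n - 1) * p ^ ((n - 1) ^ 2)) *
          (w * p ^ (2 * N + 1)) +
        tripleProductCoeff (p ^ 2) N (n + 1) * (w ^ (n + 1) * p ^ ((n + 1) ^ 2)) *
          (w⁻¹ * p ^ (2 * N + 1)) =
      tripleProductCoeff (p ^ 2) (N + 1) n * (w ^ n * p ^ (n ^ 2)) *
        ((1 - p ^ (4 * N + 2)) * (1 - p ^ (4 * N + 4))) := by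
  have hq0 : p ^ 2 ≠ 0 := pow_ne_zero 2 hp
  have hq1 := norm_sq_lt_one hp1
  have hleft := mul_zpow_sub_one_mul_zpow_sq hw hp N n
  have hright := mul_zpow_sub_one_mul_zpow_sq (inv_ne_zero hw) hp N (-n)
  rw [← neg_add', inv_zpow', inv_zpow', neg_neg, neg_neg, neg_sq, neg_sq, sub_neg_eq_add] at hright
  set X := (p ^ 2) ^ (N + n : ℤ) with hX
  set Y := (p ^ 2) ^ (N - n : ℤ) with hY
  have hXY : p ^ (4 * N) = X * Y := by
    rw [hX, hY, ← zpow_add₀ hq0, show (N + n + (N - n) : ℤ) = (2 * N : ℕ) by push_cast; ring,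
      zpow_natCast, ← pow_mul]
    ring
  rw [tripleProductCoeff_eq_mul_succ hq0 hq1, tripleProductCoeff_sub_one hq0 hq1,
    tripleProductCoeff_add_one hq0 hq1, mul_assoc _ (w ^ (n - 1) * _),
    mul_assoc _ (w ^ (n + 1) * _), mul_comm (w ^ (n - 1) * _), mul_comm (w ^ (n + 1) * _), hleft,
    hright, pow_add, pow_add, hXY, zpow_add_one₀ hq0, zpow_add_one₀ hq0]
  ring

theorem hasSum_finite_tripleProduct (hw : w ≠ 0) (hp : p ≠ 0) (hp1 : ‖p‖ < 1) (N : ℕ) :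
    HasSum (fun n : ℤ => tripleProductCoeff (p ^ 2) N n * (w ^ n * p ^ (n ^ 2)))
      (qPochhammer (p ^ 2) (p ^ 2) * qPochhammer ((p ^ 2) ^ (2 * N + 1)) (p ^ 2) *
        ∏ k ∈ Finset.range N, ((1 + w * p ^ (2 * k + 1)) * (1 + w⁻¹ * p ^ (2 * k + 1)))) := by
  have hq0 : p ^ 2 ≠ 0 := pow_ne_zero 2 hp
  have hq1 := norm_sq_lt_one hp1
  induction N with
  | zero =>
    convert hasSum_single (f := fun n : ℤ => tripleProductCoeff (p ^ 2) 0 n * (w ^ n * p ^ (n ^ 2)))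
      0 fun n hn => ?_ using 1
    · simp [tripleProductCoeff]
    · rw [tripleProductCoeff_eq_zero hq0 (by simpa using hn), zero_mul]
  | succ N ih =>
    have hpow {m : ℕ} (hm : m ≠ 0) : 1 - p ^ m ≠ 0 := by
      refine sub_ne_zero.2 fun h => ?_
      have := pow_lt_one₀ (norm_nonneg p) hp1 hm
      rw [← norm_pow, ← h, norm_one] at this
      exact this.false
    have hc : (1 - p ^ (4 * N + 2)) * (1 - p ^ (4 * N + 4)) ≠ 0 :=
      mul_ne_zero (hpow (by lia)) (hpow (by lia))
    have hleft := (Equiv.subRight (1 : ℤ)).hasSum_iff.2 ih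
    have hright := (Equiv.addRight (1 : ℤ)).hasSum_iff.2 ih
    have hsum := ((ih.mul_right (1 + p ^ (4 * N + 2))).add
      (hleft.mul_right (w * p ^ (2 * N + 1)))).add (hright.mul_right (w⁻¹ * p ^ (2 * N + 1)))
    simp only [Function.comp_def, Equiv.subRight_apply, Equiv.coe_addRight,
      tripleProductCoeff_recurrence hw hp hp1] at hsum
    rw [← hasSum_mul_right_iff hc]
    have hend : (p ^ 2) ^ (2 * N + 1) * p ^ 2 * p ^ 2 = (p ^ 2) ^ (2 * (N + 1) + 1) := by ring
    refine (congrArg (HasSum _ · _) ?_).mp hsum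
    rw [Finset.prod_range_succ, qPochhammer_eq_mul ((p ^ 2) ^ (2 * N + 1)) hq1,
      qPochhammer_eq_mul ((p ^ 2) ^ (2 * N + 1) * p ^ 2) hq1, hend]
    field_simp
    ring

end TripleProduct

section JacobiTheta

open Filter Topology

variable {τ : ℂ}

theorem qq_eq_exp_pi_mul_I_sq (τ : ℂ) : qq τ = cexp (Real.pi * I * τ) ^ 2 := by
  rw [qq, ← exp_nat_mul]
  push_cast
  ring_nf

theorem norm_qq_lt_one (hτ : 0 < τ.im) : ‖qq τ‖ < 1 :=
  UpperHalfPlane.norm_exp_two_pi_I_lt_one ⟨τ, hτ⟩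

theorem jacobiTheta₂_term_eq_zpow (n : ℤ) (z τ : ℂ) :
    jacobiTheta₂_term n z τ =
      cexp (2 * Real.pi * I * z) ^ n * cexp (Real.pi * I * τ) ^ (n ^ 2) := by
  rw [jacobiTheta₂_term, ← exp_int_mul, ← exp_int_mul, ← exp_add]
  push_cast
  ring_nf

theorem norm_exp_pi_mul_I_mul_lt_one (hτ : 0 < τ.im) : ‖cexp (Real.pi * I * τ)‖ < 1 := by
  rw [norm_exp, Real.exp_lt_one_iff]
  simpa using mul_pos Real.pi_pos hτ

theorem tendsto_prod_one_add_mul_pow_odd (a : ℂ) {p : ℂ} (hp : ‖p‖ < 1) :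
    Tendsto (fun N => ∏ k ∈ Finset.range N, (1 + a * p ^ (2 * k + 1))) atTop
      (𝓝 (qPochhammer (-(a * p)) (p ^ 2))) := by
  have h (k : ℕ) : 1 + a * p ^ (2 * k + 1) = 1 - -(a * p) * (p ^ 2) ^ k := by ring
  simp only [h]
  exact (multipliable_one_sub_mul_pow (-(a * p)) (norm_sq_lt_one hp)).tendsto_prod_tprod_nat

theorem jacobiTheta₂_eq_qPochhammer (z : ℂ) (hτ : 0 < τ.im) {w p : ℂ}
    (hw : w = cexp (2 * Real.pi * I * z)) (hp : p = cexp (Real.pi * I * τ)) :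
    jacobiTheta₂ z τ = qPochhammer (p ^ 2) (p ^ 2) *
      (qPochhammer (-(w * p)) (p ^ 2) * qPochhammer (-(w⁻¹ * p)) (p ^ 2)) := by
  have hp1 : ‖p‖ < 1 := hp ▸ norm_exp_pi_mul_I_mul_lt_one hτ
  have hp0 : p ≠ 0 := hp ▸ exp_ne_zero _
  have hw0 : w ≠ 0 := hw ▸ exp_ne_zero _
  have hq0 : p ^ 2 ≠ 0 := pow_ne_zero 2 hp0
  have hq1 := norm_sq_lt_one hp1
  have hterm (n : ℤ) : jacobiTheta₂_term n z τ = w ^ n * p ^ (n ^ 2) := by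
    rw [jacobiTheta₂_term_eq_zpow, hw, hp]
  obtain ⟨C, hC⟩ := exists_norm_tripleProductCoeff_le hq0 hq1
  have hseries : Tendsto (fun N => ∑' n, tripleProductCoeff (p ^ 2) N n * (w ^ n * p ^ (n ^ 2)))
      atTop (𝓝 (jacobiTheta₂ z τ)) := by
    refine tendsto_tsum_of_dominated_convergence
      (((hasSum_jacobiTheta₂_term z hτ).summable.norm).mul_left C) (fun n => ?_)
      (.of_forall fun N n => ?_)
    · simpa [hterm] using (tendsto_tripleProductCoeff hq0 hq1 n).mul_const (w ^ n * p ^ (n ^ 2))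
    · rw [hterm, norm_mul]
      gcongr
      exact hC N n
  simp only [(hasSum_finite_tripleProduct hw0 hp0 hp1 _).tsum_eq, Finset.prod_mul_distrib]
    at hseries
  have htail : Tendsto (fun N : ℕ => qPochhammer ((p ^ 2) ^ (2 * N + 1)) (p ^ 2)) atTop (𝓝 1) :=
    tendsto_qPochhammer_one hq1 ((tendsto_pow_atTop_nhds_zero_of_norm_lt_one hq1).comp
      (tendsto_atTop_mono (fun N => by simp only [id_eq]; lia) tendsto_id))
  refine tendsto_nhds_unique hseries ?_
  simpa only [mul_one] using (htail.const_mul (qPochhammer (p ^ 2) (p ^ 2))).mul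
    ((tendsto_prod_one_add_mul_pow_odd w hp1).mul (tendsto_prod_one_add_mul_pow_odd w⁻¹ hp1))

theorem jacobiTheta₂'_eq_qPochhammer_pow_three (hτ : 0 < τ.im) :
    jacobiTheta₂' ((1 - τ) / 2) τ = -(2 * Real.pi * I) * qPochhammer (qq τ) (qq τ) ^ 3 := by
  set q := qq τ
  set p := cexp (Real.pi * I * τ) with hp
  have hp0 : p ≠ 0 := exp_ne_zero _
  have hqp : q = p ^ 2 := qq_eq_exp_pi_mul_I_sq τ
  have hq1 : ‖q‖ < 1 := norm_qq_lt_one hτ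
  set w : ℂ → ℂ := fun z => cexp (2 * Real.pi * I * z) with hw
  set G : ℂ → ℂ := fun z => qPochhammer q q *
    (qPochhammer (-(w z * p) * q) q * qPochhammer (-((w z)⁻¹ * p)) q) with hG
  have hfactor : (jacobiTheta₂ · τ) = fun z => (1 + w z * p) * G z := by
    ext z
    rw [jacobiTheta₂_eq_qPochhammer z hτ rfl hp, ← hqp, qPochhammer_eq_mul (-(_ * p)) hq1, hG]
    ring
  have hwp : w ((1 - τ) / 2) * p = -1 := by
    rw [hw, hp, ← exp_add, ← exp_pi_mul_I]
    ring_nf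
  have hwp' : (w ((1 - τ) / 2))⁻¹ * p = -q := by
    rw [eq_div_of_mul_eq hp0 hwp, hqp]
    field_simp
  have hvanish : HasDerivAt (fun z => 1 + w z * p) (-(2 * Real.pi * I)) ((1 - τ) / 2) := by
    have hderiv : HasDerivAt w (w ((1 - τ) / 2) * (2 * Real.pi * I)) ((1 - τ) / 2) := by
      simpa using ((hasDerivAt_id ((1 - τ) / 2)).const_mul (2 * Real.pi * I)).cexp
    have h := (hderiv.mul_const p).const_add 1
    rwa [mul_right_comm, hwp, neg_one_mul] at h
  have hGdiff : DifferentiableAt ℂ G ((1 - τ) / 2) := by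
    have hqP := differentiable_qPochhammer hq1
    have hw0 (z : ℂ) : w z ≠ 0 := exp_ne_zero _
    fun_prop (disch := simp [hw0])
  have h := hvanish.mul hGdiff.hasDerivAt
  rw [hwp, add_neg_cancel, zero_mul, add_zero] at h
  have hderiv := hasDerivAt_jacobiTheta₂_fst ((1 - τ) / 2) hτ
  rw [hfactor] at hderiv
  rw [hderiv.unique h, hG]
  simp only [hwp, hwp', neg_neg, one_mul]
  ring

theorem hasSum_qPochhammer_pow_three (hτ : 0 < τ.im) :
    HasSum (fun n : ℤ => (4 * n + 1) * qq τ ^ (n * (2 * n + 1)))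
      (qPochhammer (qq τ) (qq τ) ^ 3) := by
  have hterm (n : ℤ) : jacobiTheta₂'_term n ((1 - τ) / 2) τ =
      2 * Real.pi * I * (n * cexp (Real.pi * I * (n + (n ^ 2 - n) * τ))) := by
    rw [jacobiTheta₂'_term, jacobiTheta₂_term]
    ring_nf
  have heven (n : ℤ) :
      cexp (Real.pi * I * (((-(2 * n) : ℤ) : ℂ) + ((-(2 * n) : ℤ) ^ 2 - (-(2 * n) : ℤ)) * τ)) =
        qq τ ^ (n * (2 * n + 1)) := by
    rw [qq, ← exp_int_mul, exp_eq_exp_iff_exists_int]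
    refine ⟨-n, ?_⟩
    push_cast
    ring
  have hodd (n : ℤ) :
      cexp (Real.pi * I * (((2 * n + 1 : ℤ) : ℂ) + ((2 * n + 1 : ℤ) ^ 2 - (2 * n + 1 : ℤ)) * τ)) =
        -qq τ ^ (n * (2 * n + 1)) := by
    rw [qq, ← exp_int_mul, ← neg_one_mul, ← exp_pi_mul_I, ← exp_add, exp_eq_exp_iff_exists_int]
    refine ⟨n, ?_⟩
    push_cast
    ring
  have h := hasSum_add_of_bijective_sumElim bijective_neg_two_mul_sumElim
    (hasSum_jacobiTheta₂'_term ((1 - τ) / 2) hτ)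
  simp only [hterm, heven, hodd, jacobiTheta₂'_eq_qPochhammer_pow_three hτ] at h
  rw [← hasSum_mul_left_iff (neg_ne_zero.2 two_pi_I_ne_zero)]
  refine (congrArg₂ (HasSum · · _) (funext fun n => ?_) rfl).mpr h
  push_cast
  ring

end JacobiTheta

/-- The theta series `Σ_{n ∈ ℤ} q^{(n+c)²}` of the shifted lattice `ℤ + c`. -/
noncomputable def thetaShift (c τ : ℂ) : ℂ := ∑' n : ℤ, cexp (2 * Real.pi * I * (n + c) ^ 2 * τ)

/-- The theta series `θ₂(τ) = Σ_{n ∈ ℤ} q^{(n+1/2)²}` over half-integers. -/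
noncomputable abbrev θ₂ : ℂ → ℂ := thetaShift (1 / 2)

section ThetaShift

variable {τ : ℂ}

theorem θ_eq_thetaShift_zero : θ = thetaShift 0 := by
  ext τ
  refine tsum_congr fun n => ?_
  rw [qq, ← exp_int_mul]
  push_cast
  ring_nf

theorem cexp_mul_add_sq_mul_eq (c τ : ℂ) (n : ℤ) :
    cexp (2 * Real.pi * I * (n + c) ^ 2 * τ) =
      cexp (2 * Real.pi * I * c ^ 2 * τ) * jacobiTheta₂_term n (2 * c * τ) (2 * τ) := by
  rw [jacobiTheta₂_term, ← exp_add]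
  ring_nf

theorem thetaShift_eq_mul_jacobiTheta₂ (c τ : ℂ) :
    thetaShift c τ = cexp (2 * Real.pi * I * c ^ 2 * τ) * jacobiTheta₂ (2 * c * τ) (2 * τ) := by
  simp only [thetaShift, cexp_mul_add_sq_mul_eq c τ, tsum_mul_left, jacobiTheta₂]

theorem hasSum_thetaShift (c : ℂ) (hτ : 0 < τ.im) :
    HasSum (fun n : ℤ => cexp (2 * Real.pi * I * (n + c) ^ 2 * τ)) (thetaShift c τ) := by
  simp only [cexp_mul_add_sq_mul_eq c τ, thetaShift_eq_mul_jacobiTheta₂]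
  exact (hasSum_jacobiTheta₂_term _ (by simpa using hτ)).mul_left _

theorem hasDerivAt_thetaShift (c : ℂ) (hτ : 0 < τ.im) :
    HasDerivAt (thetaShift c)
      (cexp (2 * Real.pi * I * c ^ 2 * τ) * (2 * Real.pi * I * c ^ 2) *
          jacobiTheta₂ (2 * c * τ) (2 * τ) +
        cexp (2 * Real.pi * I * c ^ 2 * τ) *
          jacobiTheta₂_fderiv (2 * c * τ) (2 * τ) (2 * c, 2)) τ := by
  have hexp : HasDerivAt (fun s => cexp (2 * Real.pi * I * c ^ 2 * s))
      (cexp (2 * Real.pi * I * c ^ 2 * τ) * (2 * Real.pi * I * c ^ 2)) τ := by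
    simpa using ((hasDerivAt_id τ).const_mul (2 * Real.pi * I * c ^ 2)).cexp
  have hpath : HasDerivAt (fun s : ℂ => (2 * c * s, 2 * s)) (2 * c, 2) τ := by
    simpa using ((hasDerivAt_id τ).const_mul (2 * c)).prodMk ((hasDerivAt_id τ).const_mul 2)
  have h2τ : 0 < (2 * τ).im := by simpa using hτ
  have hjacobi := (hasFDerivAt_jacobiTheta₂ (2 * c * τ) h2τ).comp_hasDerivAt τ
    (f := fun s => (2 * c * s, 2 * s)) hpath
  exact (hexp.mul hjacobi).congr_of_eventuallyEq
    (.of_forall fun s => thetaShift_eq_mul_jacobiTheta₂ c s)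

theorem hasSum_deriv_thetaShift (c : ℂ) (hτ : 0 < τ.im) :
    HasSum (fun n : ℤ => 2 * Real.pi * I * (n + c) ^ 2 * cexp (2 * Real.pi * I * (n + c) ^ 2 * τ))
      (deriv (thetaShift c) τ) := by
  have h2τ : 0 < (2 * τ).im := by simpa using hτ
  have hsum := ((hasSum_jacobiTheta₂_term (2 * c * τ) h2τ).mul_left
    (cexp (2 * Real.pi * I * c ^ 2 * τ) * (2 * Real.pi * I * c ^ 2))).add
    (((hasSum_jacobiTheta₂_term_fderiv (2 * c * τ) h2τ).mapL
      (ContinuousLinearMap.apply ℂ ℂ (2 * c, (2 : ℂ)))).mul_left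
      (cexp (2 * Real.pi * I * c ^ 2 * τ)))
  rw [(hasDerivAt_thetaShift c hτ).deriv]
  refine (congrArg₂ (HasSum · · _) (funext fun n => ?_) rfl).mpr hsum
  rw [cexp_mul_add_sq_mul_eq, jacobiTheta₂_term_fderiv, jacobiTheta₂_term]
  simp only [smul_add, ContinuousLinearMap.apply_apply, add_apply, smul_apply,
    ContinuousLinearMap.coe_fst', smul_eq_mul, ContinuousLinearMap.coe_snd']
  ring

theorem θ_add_one (τ : ℂ) : θ (τ + 1) = θ τ := by
  have hqq : qq (τ + 1) = qq τ := by
    rw [qq, qq, mul_add_one, exp_add, exp_two_pi_mul_I, mul_one]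
  rw [θ, θ, hqq]

theorem θ₂_add_one (τ : ℂ) : θ₂ (τ + 1) = I * θ₂ τ := by
  rw [θ₂, thetaShift, thetaShift, ← tsum_mul_left]
  refine tsum_congr fun n => ?_
  refine Eq.trans ?_ (congrArg (· * _) exp_pi_div_two_mul_I)
  rw [← exp_add, exp_eq_exp_iff_exists_int]
  refine ⟨n ^ 2 + n, ?_⟩
  push_cast
  ring

theorem θ_eq_θ_add_θ₂ (hτ : 0 < τ.im) : θ τ = θ (4 * τ) + θ₂ (4 * τ) := by
  have h4τ : 0 < (4 * τ).im := by simpa using hτ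
  rw [θ_eq_thetaShift_zero]
  refine (hasSum_add_of_bijective_sumElim bijective_neg_two_mul_sumElim
    (hasSum_thetaShift 0 hτ)).unique ?_
  refine (congrArg₂ (HasSum · · _) (funext fun n => ?_) rfl).mpr
    ((hasSum_thetaShift 0 h4τ).add (hasSum_thetaShift (1 / 2) h4τ))
  push_cast
  ring_nf

theorem θ_sq_eq (hτ : 0 < τ.im) : θ τ ^ 2 = θ (2 * τ) ^ 2 + θ₂ (2 * τ) ^ 2 := by
  have h2τ : 0 < (2 * τ).im := by simpa using hτ
  rw [θ_eq_thetaShift_zero, sq, sq, sq]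
  have hprod := hasSum_mul_prod (hasSum_thetaShift 0 hτ) (hasSum_thetaShift 0 hτ)
  have hleft := hasSum_add_of_bijective_sumElim bijective_add_sub_sumElim hprod
  have hright := (hasSum_mul_prod (hasSum_thetaShift 0 h2τ) (hasSum_thetaShift 0 h2τ)).add
    (hasSum_mul_prod (hasSum_thetaShift (1 / 2) h2τ) (hasSum_thetaShift (1 / 2) h2τ))
  refine hleft.unique ((congrArg (HasSum · _ _) (funext fun n => ?_)).mpr hright)
  simp only [← exp_add]
  push_cast
  ring_nf

theorem θ_add_half_sq_eq (hτ : 0 < τ.im) :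
    θ (τ + 1 / 2) ^ 2 = θ (2 * τ) ^ 2 - θ₂ (2 * τ) ^ 2 := by
  rw [θ_sq_eq (by simpa using hτ), mul_add, mul_one_div_cancel two_ne_zero, θ_add_one, θ₂_add_one,
    mul_pow, I_sq, neg_one_mul, sub_eq_add_neg]

theorem f₄_eq (j : ℕ) (hτ : 0 < τ.im) : f₄ j τ = θ (2 * τ) - (-1) ^ j * I * θ₂ (2 * τ) := by
  have him : 0 < (τ / 2 - (-1) ^ j / 4).im := by
    rcases neg_one_pow_eq_or ℂ j with h | h <;> simpa [h] using hτ
  rw [f₄, θ_eq_θ_add_θ₂ him, mul_sub, show 4 * (τ / 2) = 2 * τ by ring,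
    show 4 * ((-1) ^ j / 4) = (-1 : ℂ) ^ j by ring]
  rcases neg_one_pow_eq_or ℂ j with h | h <;> rw [h]
  · have hθ := θ_add_one (2 * τ - 1)
    have hθ₂ := θ₂_add_one (2 * τ - 1)
    rw [sub_add_cancel] at hθ hθ₂
    rw [hθ, hθ₂, one_mul, ← mul_assoc, I_mul_I]
    ring
  · rw [sub_neg_eq_add, θ_add_one, θ₂_add_one]
    ring

end ThetaShift

section Wronskian

variable {τ : ℂ}

theorem η_eq_mul_qPochhammer (τ : ℂ) :
    η τ = cexp (Real.pi * I * τ / 12) * qPochhammer (qq τ) (qq τ) := by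
  simp only [η, qPochhammer, pow_succ']

theorem hasSum_η_pow_three (hτ : 0 < τ.im) :
    HasSum (fun n : ℤ => (4 * n + 1) * cexp (Real.pi * I * (4 * n + 1) ^ 2 * τ / 4))
      (η τ ^ 3) := by
  have hterm (n : ℤ) : (4 * n + 1) * cexp (Real.pi * I * (4 * n + 1) ^ 2 * τ / 4) =
      cexp (Real.pi * I * τ / 12) ^ 3 * ((4 * n + 1) * qq τ ^ (n * (2 * n + 1))) := by
    rw [mul_left_comm, qq, ← exp_int_mul, ← exp_nat_mul, ← exp_add]
    push_cast
    ring_nf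
  simp only [hterm, η_eq_mul_qPochhammer, mul_pow]
  exact (hasSum_qPochhammer_pow_three hτ).mul_left _

theorem θ_wronskian (hτ : 0 < τ.im) :
    θ τ * deriv θ₂ τ - deriv θ τ * θ₂ τ = Real.pi * I * η τ ^ 6 := by
  have hη := hasSum_η_pow_three hτ
  have hη_neg := (Equiv.neg ℤ).hasSum_iff.2 hη
  have hη_reflect := (Equiv.subLeft (-1 : ℤ)).hasSum_iff.2 hη
  have hprod := ((hasSum_mul_prod hη hη_neg).mul_left (Real.pi * I / 2)).add
    ((hasSum_mul_prod hη_reflect hη).mul_left (Real.pi * I / 2))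
  have hwronskian := hasSum_add_of_bijective_sumElim bijective_add_sub_sumElim
    ((hasSum_mul_prod (hasSum_thetaShift 0 hτ) (hasSum_deriv_thetaShift (1 / 2) hτ)).sub
      (hasSum_mul_prod (hasSum_deriv_thetaShift 0 hτ) (hasSum_thetaShift (1 / 2) hτ)))
  rw [θ_eq_thetaShift_zero]
  refine hwronskian.unique ((congrArg₂ (HasSum · · _) (funext fun n => ?_) ?_).mpr hprod)
  · -- `(n + 1/2)² - m² = (n + 1/2 + m) (n + 1/2 - m)`, and on each half of the dissection the two
    -- factors separate the variables, each being half a number `≡ 1 (mod 4)` up to sign.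
    have hleft := congrArg cexp (show (2 * Real.pi * I * (n.1 + n.2) ^ 2 * τ +
        2 * Real.pi * I * (n.1 - n.2 + 1 / 2) ^ 2 * τ : ℂ) =
      Real.pi * I * (4 * n.1 + 1) ^ 2 * τ / 4 + Real.pi * I * (4 * -n.2 + 1) ^ 2 * τ / 4 by ring)
    have hright := congrArg cexp (show (2 * Real.pi * I * (n.1 + n.2 + 1) ^ 2 * τ +
        2 * Real.pi * I * (n.1 - n.2 + 1 / 2) ^ 2 * τ : ℂ) =
      Real.pi * I * (4 * (-1 - n.1) + 1) ^ 2 * τ / 4 + Real.pi * I * (4 * n.2 + 1) ^ 2 * τ / 4 by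
        ring)
    rw [exp_add, exp_add] at hleft hright
    simp only [Function.comp_apply, Equiv.neg_apply, Equiv.subLeft_apply, add_zero]
    push_cast
    linear_combination (Real.pi * I / 2) * (4 * n.1 + 1) * (1 - 4 * n.2) * hleft -
      (Real.pi * I / 2) * (4 * n.1 + 3) * (1 + 4 * n.2) * hright
  · ring

end Wronskian

section EtaProducts

variable {τ : ℂ}

theorem qq_natCast_mul (k : ℕ) (τ : ℂ) : qq (k * τ) = qq τ ^ k := by
  rw [qq, qq, ← exp_nat_mul]
  ring_nf

theorem qq_add_half (τ : ℂ) : qq (τ + 1 / 2) = -qq τ := by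
  have hπ : 2 * Real.pi * I * (τ + 1 / 2) = 2 * Real.pi * I * τ + Real.pi * I := by ring
  rw [qq, qq, hπ, exp_add, exp_pi_mul_I, mul_neg_one]

theorem η_natCast_mul (k : ℕ) (τ : ℂ) :
    η (k * τ) = cexp (Real.pi * I * τ / 12) ^ k * qPochhammer (qq τ ^ k) (qq τ ^ k) := by
  rw [η_eq_mul_qPochhammer, qq_natCast_mul, ← exp_nat_mul]
  ring_nf

theorem η_two_mul (τ : ℂ) :
    η (2 * τ) = cexp (Real.pi * I * τ / 12) ^ 2 * qPochhammer (qq τ ^ 2) (qq τ ^ 2) :=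
  mod_cast η_natCast_mul 2 τ

theorem η_four_mul (τ : ℂ) :
    η (4 * τ) = cexp (Real.pi * I * τ / 12) ^ 4 * qPochhammer (qq τ ^ 4) (qq τ ^ 4) :=
  mod_cast η_natCast_mul 4 τ

theorem η_eq_eta : η = ModularForm.eta := by
  ext τ
  simp only [η, ModularForm.eta, ModularForm.eta_q_eq_pow, qq, Function.Periodic.qParam]
  congr 2
  push_cast
  ring

theorem η_ne_zero (hτ : 0 < τ.im) : η τ ≠ 0 :=
  η_eq_eta ▸ ModularForm.eta_ne_zero hτ

theorem θ_eq_qPochhammer (hτ : 0 < τ.im) :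
    θ τ = qPochhammer (qq τ ^ 2) (qq τ ^ 2) * qPochhammer (-qq τ) (qq τ ^ 2) ^ 2 := by
  have h2τ : 0 < (2 * τ).im := by simpa using hτ
  have hp : qq τ = cexp (Real.pi * I * (2 * τ)) := by rw [qq]; ring_nf
  rw [θ_eq_thetaShift_zero, thetaShift_eq_mul_jacobiTheta₂,
    jacobiTheta₂_eq_qPochhammer _ h2τ (w := 1) (by simp) hp]
  simp only [ne_eq, OfNat.ofNat_ne_zero, not_false_eq_true, zero_pow, mul_zero, zero_mul, exp_zero,
    one_mul, inv_one, sq (qPochhammer (-qq τ) (qq τ ^ 2))]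

theorem θ₂_eq_qPochhammer (hτ : 0 < τ.im) :
    θ₂ τ = 2 * cexp (Real.pi * I * τ / 12) ^ 6 *
      (qPochhammer (qq τ ^ 2) (qq τ ^ 2) * qPochhammer (-qq τ ^ 2) (qq τ ^ 2) ^ 2) := by
  have h2τ : 0 < (2 * τ).im := by simpa using hτ
  have hp : qq τ = cexp (Real.pi * I * (2 * τ)) := by rw [qq]; ring_nf
  have hw : qq τ = cexp (2 * Real.pi * I * (2 * (1 / 2) * τ)) := by rw [qq]; ring_nf
  have hprefactor : cexp (2 * Real.pi * I * (1 / 2) ^ 2 * τ) =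
      cexp (Real.pi * I * τ / 12) ^ 6 := by
    rw [← exp_nat_mul]
    push_cast
    ring_nf
  rw [θ₂, thetaShift_eq_mul_jacobiTheta₂, jacobiTheta₂_eq_qPochhammer _ h2τ hw hp, hprefactor,
    inv_mul_cancel₀ (show qq τ ≠ 0 from exp_ne_zero _), ← sq,
    qPochhammer_eq_mul (-1) (norm_sq_lt_one (norm_qq_lt_one hτ)), neg_one_mul]
  ring

theorem θ_eq_η (hτ : 0 < τ.im) : θ τ = η (2 * τ) ^ 5 / (η τ * η (4 * τ)) ^ 2 := by
  have h4τ : 0 < (4 * τ).im := by simpa using hτ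
  have hq := norm_qq_lt_one hτ
  have hq2 := norm_sq_lt_one hq
  have hP₂ : qPochhammer (qq τ) (qq τ ^ 2) * qPochhammer (-qq τ) (qq τ ^ 2) *
      qPochhammer (qq τ ^ 4) (qq τ ^ 4) = qPochhammer (qq τ ^ 2) (qq τ ^ 2) := by
    rw [qPochhammer_mul_neg _ hq2, qPochhammer_eq_even_mul_odd (qq τ ^ 2) hq2, ← sq, ← pow_mul]
  rw [eq_div_iff (pow_ne_zero 2 (mul_ne_zero (η_ne_zero hτ) (η_ne_zero h4τ))), θ_eq_qPochhammer hτ,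
    η_two_mul, η_four_mul, η_eq_mul_qPochhammer, qPochhammer_eq_even_mul_odd (qq τ) hq, ← sq]
  linear_combination (cexp (Real.pi * I * τ / 12) ^ 10 * qPochhammer (qq τ ^ 2) (qq τ ^ 2) ^ 3) *
    congrArg (· ^ 2) hP₂

theorem θ_add_half_eq_η (hτ : 0 < τ.im) : θ (τ + 1 / 2) = η τ ^ 2 / η (2 * τ) := by
  have h2τ : 0 < (2 * τ).im := by simpa using hτ
  have hhalf : 0 < (τ + 1 / 2).im := by simpa using hτ
  rw [eq_div_iff (η_ne_zero h2τ), θ_eq_qPochhammer hhalf, qq_add_half, neg_sq, neg_neg,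
    η_two_mul, η_eq_mul_qPochhammer, qPochhammer_eq_even_mul_odd (qq τ) (norm_qq_lt_one hτ), ← sq]
  ring

theorem θ₂_eq_η (hτ : 0 < τ.im) : θ₂ τ = 2 * η (4 * τ) ^ 2 / η (2 * τ) := by
  have h2τ : 0 < (2 * τ).im := by simpa using hτ
  have hP := qPochhammer_mul_neg (qq τ ^ 2) (norm_sq_lt_one (norm_qq_lt_one hτ))
  rw [← pow_mul] at hP
  rw [eq_div_iff (η_ne_zero h2τ), θ₂_eq_qPochhammer hτ, η_two_mul, η_four_mul, ← hP]
  ring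

theorem θ_mul_θ₂ (hτ : 0 < τ.im) : θ τ * θ₂ τ = 2 * η (2 * τ) ^ 4 / η τ ^ 2 := by
  have hη₁ := η_ne_zero hτ
  have hη₂ : η (2 * τ) ≠ 0 := η_ne_zero (by simpa using hτ)
  have hη₄ : η (4 * τ) ≠ 0 := η_ne_zero (by simpa using hτ)
  rw [θ_eq_η hτ, θ₂_eq_η hτ]
  generalize η (4 * τ) = η₄ at *
  field_simp

theorem θ_mul_θ₂_mul_sq_sub_sq (hτ : 0 < τ.im) :
    θ (2 * τ) * θ₂ (2 * τ) * (θ (2 * τ) ^ 2 - θ₂ (2 * τ) ^ 2) =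
      2 * (η τ * η (4 * τ) / η (2 * τ)) ^ 4 := by
  have h2τ : 0 < (2 * τ).im := by simpa using hτ
  rw [θ_mul_θ₂ h2τ, ← θ_add_half_sq_eq hτ, θ_add_half_eq_η hτ, ← mul_assoc,
    show (2 * 2 : ℂ) = 4 by norm_num]
  ring

theorem θ_mul_θ₂_mul_pow_four_sub_pow_four (hτ : 0 < τ.im) :
    θ (2 * τ) * θ₂ (2 * τ) * (θ (2 * τ) ^ 4 - θ₂ (2 * τ) ^ 4) = 2 * η (2 * τ) ^ 6 := by
  have hη₁ := η_ne_zero hτ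
  have hη₂ : η (2 * τ) ≠ 0 := η_ne_zero (by simpa using hτ)
  have hη₄ : η (4 * τ) ≠ 0 := η_ne_zero (by simpa using hτ)
  calc θ (2 * τ) * θ₂ (2 * τ) * (θ (2 * τ) ^ 4 - θ₂ (2 * τ) ^ 4)
      = θ (2 * τ) * θ₂ (2 * τ) * (θ (2 * τ) ^ 2 - θ₂ (2 * τ) ^ 2) *
          (θ (2 * τ) ^ 2 + θ₂ (2 * τ) ^ 2) := by ring
    _ = 2 * η (2 * τ) ^ 6 := by
      rw [θ_mul_θ₂_mul_sq_sub_sq hτ, ← θ_sq_eq hτ, θ_eq_η hτ]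
      generalize η (4 * τ) = η₄ at *
      field_simp

end EtaProducts

section EisensteinSeries

variable {τ : ℂ}

theorem E₂_eq_E2 (τ : UpperHalfPlane) : E₂ τ = EisensteinSeries.E2 τ := by
  rw [E₂, EisensteinSeries.E2_eq_tsum_cexp,
    tsum_pnat_eq_tsum_succ
      (f := fun n : ℕ => (ArithmeticFunction.sigma 1 n : ℂ) * cexp (2 * Real.pi * I * τ) ^ n)]
  simp [sigmaC, qq, ArithmeticFunction.sigma_apply]

theorem differentiableAt_η (hτ : 0 < τ.im) : DifferentiableAt ℂ η τ :=
  η_eq_eta ▸ ModularForm.differentiableAt_eta_of_mem_upperHalfPlaneSet hτ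

theorem logDeriv_η (hτ : 0 < τ.im) : logDeriv η τ = Real.pi * I / 12 * E₂ τ := by
  lift τ to UpperHalfPlane using hτ
  rw [η_eq_eta, ModularForm.logDeriv_eta_eq_E2, E₂_eq_E2]

theorem differentiableAt_η_const_mul {k : ℂ} (hkτ : 0 < (k * τ).im) :
    DifferentiableAt ℂ (fun s => η (k * s)) τ :=
  (differentiableAt_η hkτ).comp τ (differentiableAt_id.const_mul k)

theorem logDeriv_η_const_mul {k : ℂ} (hkτ : 0 < (k * τ).im) :
    logDeriv (fun s => η (k * s)) τ = Real.pi * I / 12 * (k * E₂ (k * τ)) := by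
  have hcomp := logDeriv_comp (differentiableAt_η hkτ) (differentiableAt_id.const_mul k)
  simp only [logDeriv_η hkτ, deriv_const_mul_id'] at hcomp
  exact hcomp.trans (by ring)

theorem logDeriv_η_quotient (hτ : 0 < τ.im) :
    logDeriv (fun s => 2 * (η s * η (4 * s) / η (2 * s) ^ 2) ^ 12) τ =
      Real.pi * I * E₄₂' τ := by
  have h2τ : 0 < (2 * τ).im := by simpa using hτ
  have h4τ : 0 < (4 * τ).im := by simpa using hτ
  have hη₁ := η_ne_zero hτ
  have hη₄ := η_ne_zero h4τ
  have hη₂ := pow_ne_zero 2 (η_ne_zero h2τ)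
  have hd₁ := differentiableAt_η hτ
  have hd₂ := differentiableAt_η_const_mul h2τ
  have hd₄ := differentiableAt_η_const_mul h4τ
  have hmul := hd₁.fun_mul hd₄
  have hquot := logDeriv_div (f := fun s => η s * η (4 * s)) (g := fun s => η (2 * s) ^ 2) τ
    (mul_ne_zero hη₁ hη₄) hη₂ hmul (hd₂.fun_pow 2)
  rw [logDeriv_const_mul τ 2 two_ne_zero, logDeriv_fun_pow (hmul.fun_div (hd₂.fun_pow 2) hη₂),
    hquot, logDeriv_mul (f := η) (g := fun s => η (4 * s)) τ hη₁ hη₄ hd₁ hd₄,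
    logDeriv_fun_pow hd₂, logDeriv_η hτ, logDeriv_η_const_mul h4τ, logDeriv_η_const_mul h2τ,
    E₄₂']
  push_cast
  ring

theorem logDeriv_mul_sq_sub_sq_div_sq_add_sq {𝕜 : Type*} [NontriviallyNormedField 𝕜]
    {f g : 𝕜 → 𝕜} {x f' g' : 𝕜} (hf : HasDerivAt f f' x) (hg : HasDerivAt g g' x)
    (hadd : f x ^ 2 + g x ^ 2 ≠ 0) :
    logDeriv (fun s => f s * g s * (f s ^ 2 - g s ^ 2) / (f s ^ 2 + g s ^ 2) ^ 2) x =
      (f x * g' - f' * g x) * (f x ^ 4 - 6 * f x ^ 2 * g x ^ 2 + g x ^ 4) /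
        (f x * g x * (f x ^ 4 - g x ^ 4)) := by
  have hderiv := ((hf.fun_mul hg).fun_mul ((hf.fun_pow 2).fun_sub (hg.fun_pow 2))).fun_div
    (((hf.fun_pow 2).fun_add (hg.fun_pow 2)).fun_pow 2) (pow_ne_zero 2 hadd)
  have hfactor : f x ^ 4 - g x ^ 4 = (f x ^ 2 - g x ^ 2) * (f x ^ 2 + g x ^ 2) := by ring
  rw [logDeriv_apply, hderiv.deriv, hfactor]
  push_cast
  field_simp
  ring

theorem θ_quotient_eq_η_quotient (hτ : 0 < τ.im) :
    θ (2 * τ) * θ₂ (2 * τ) * (θ (2 * τ) ^ 2 - θ₂ (2 * τ) ^ 2) /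
        (θ (2 * τ) ^ 2 + θ₂ (2 * τ) ^ 2) ^ 2 =
      2 * (η τ * η (4 * τ) / η (2 * τ) ^ 2) ^ 12 := by
  have hη₁ := η_ne_zero hτ
  have hη₂ : η (2 * τ) ≠ 0 := η_ne_zero (by simpa using hτ)
  have hη₄ : η (4 * τ) ≠ 0 := η_ne_zero (by simpa using hτ)
  rw [θ_mul_θ₂_mul_sq_sub_sq hτ, ← θ_sq_eq hτ, θ_eq_η hτ]
  generalize η (4 * τ) = η₄ at *
  field_simp

theorem E₄₂'_eq (hτ : 0 < τ.im) :
    E₄₂' τ = θ (2 * τ) ^ 4 - 6 * θ (2 * τ) ^ 2 * θ₂ (2 * τ) ^ 2 + θ₂ (2 * τ) ^ 4 := by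
  have h2τ : 0 < (2 * τ).im := by simpa using hτ
  have hη := θ_mul_θ₂_mul_pow_four_sub_pow_four hτ
  have hη₂ := η_ne_zero h2τ
  have hadd : θ (2 * τ) ^ 2 + θ₂ (2 * τ) ^ 2 ≠ 0 := by
    intro h
    refine pow_ne_zero 6 hη₂ ?_
    linear_combination (1 / 2) * (-hη +
      θ (2 * τ) * θ₂ (2 * τ) * (θ (2 * τ) ^ 2 - θ₂ (2 * τ) ^ 2) * h)
  have hθ' : HasDerivAt (fun s => θ (2 * s)) (deriv θ (2 * τ) * 2) τ := by
    have h := (hasDerivAt_thetaShift 0 h2τ).differentiableAt.hasDerivAt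
    rw [← θ_eq_thetaShift_zero] at h
    exact h.comp τ (hasDerivAt_const_mul 2)
  have hθ₂' : HasDerivAt (fun s => θ₂ (2 * s)) (deriv θ₂ (2 * τ) * 2) τ :=
    (hasDerivAt_thetaShift (1 / 2) h2τ).differentiableAt.hasDerivAt.comp τ (hasDerivAt_const_mul 2)
  have hlog := (logDeriv_congr_nhds (((isOpen_lt continuous_const continuous_im).eventually_mem
    hτ).mono fun s hs => θ_quotient_eq_η_quotient hs)).self_of_nhds
  have hwronskian : θ (2 * τ) * (deriv θ₂ (2 * τ) * 2) - deriv θ (2 * τ) * 2 * θ₂ (2 * τ) =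
      Real.pi * I * (2 * η (2 * τ) ^ 6) := by
    linear_combination 2 * θ_wronskian h2τ
  rw [logDeriv_mul_sq_sub_sq_div_sq_add_sq hθ' hθ₂' hadd, logDeriv_η_quotient hτ, hη,
    hwronskian, mul_right_comm, mul_div_cancel_right₀ _ (by simpa using hη₂)] at hlog
  exact (mul_left_cancel₀ (by simp [Real.pi_ne_zero]) hlog).symm

end EisensteinSeries

section FourthPower

variable {τ : ℂ}

theorem f₄_pow_four (j : ℕ) (hτ : 0 < τ.im) :
    f₄ j τ ^ 4 = E₄₂' τ - (-1) ^ j * (8 * I) * (η τ * η (4 * τ) / η (2 * τ)) ^ 4 := by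
  have hu : ((-1) ^ j * I) ^ 2 = -1 := by
    rw [mul_pow, pow_right_comm, neg_one_sq, one_pow, one_mul, I_sq]
  rw [f₄_eq j hτ, E₄₂'_eq hτ]
  set A := θ (2 * τ)
  set B := θ₂ (2 * τ)
  set u := (-1) ^ j * I
  linear_combination (6 * A ^ 2 * B ^ 2 - 4 * u * A * B ^ 3 + (u ^ 2 - 1) * B ^ 4) * hu -
    4 * u * θ_mul_θ₂_mul_sq_sub_sq hτ

theorem f₄_zero_mul_f₄_one (hτ : 0 < τ.im) : f₄ 0 τ * f₄ 1 τ = θ τ ^ 2 := by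
  rw [f₄_eq 0 hτ, f₄_eq 1 hτ, θ_sq_eq hτ]
  linear_combination -θ₂ (2 * τ) ^ 2 * I_sq

end FourthPower

theorem stmt18 :
    (∀ j : ℕ, j < 2 → ∀ τ : ℂ, 0 < τ.im →
      f₄ j τ ^ 4 = E₄₂' τ - (-1 : ℂ) ^ j * (8 * Complex.I) * (η τ * η (4 * τ) / η (2 * τ)) ^ 4) ∧
    (∀ τ : ℂ, 0 < τ.im → f₄ 0 τ * f₄ 1 τ = θ τ ^ 2) :=
  ⟨fun j _ _ hτ => f₄_pow_four j hτ, fun _ hτ => f₄_zero_mul_f₄_one hτ⟩
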